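/- Let M be a Hausdorff topological space, I an index type, Ω : I → Set M a family of open subsets, and r a reflexive and symmetric relation on I such that: (1) for all i, j, the set Ω i ∩ Ω j is preconnected (i.e. has at most one connected component); (2) if r i j then Ω i ∩ Ω j is nonempty; (3) if r i j, r j k and Ω i ∩ Ω j ∩ Ω k is nonempty, then r i k. Then there exist a Hausdorff topological space N, a local homeomorphism φ : N → M, and for each i a continuous map α i : Ω i → N, such that: (A) the images α i '' (Ω i) cover N; (B) for all i, j, r i j holds if and only if α i '' (Ω i) ∩ α j '' (Ω j) is nonempty; and (C) for every i and every x ∈ Ω i, φ (α i x) = x. -/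

import Mathlib

/-!
Glue the disjoint union of the `Ω i` by identifying `x ∈ Ω i` with `y ∈ Ω j` when they are the same
point of `M` and `r i j` holds; hypothesis `h3` is exactly transitivity. The inverse image in `Ω j`
of the sheet over `Ω i` is either `Ω i ∩ Ω j` or empty, so sheets are open and project
homeomorphically to `M`. Sheets that meet have related indices, so they are identified over their
whole overlap; hence distinct points of the quotient over one point of `M` lie on disjoint sheets.
-/

open Set Function Topology

theorem t2Space_of_isSeparatedMap {X Y : Type*} [TopologicalSpace X] [TopologicalSpace Y]
    [T2Space Y] {f : X → Y} (hsep : IsSeparatedMap f) (hcont : Continuous f) : T2Space X where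
  t2 x y hxy := by
    by_cases h : f x = f y
    · exact hsep x y h hxy
    · exact separated_by_continuous hcont h

/-- Gluing data for a join: a family of subsets of `X` with an equivalence-like relation on the
indices, for which transitivity is only required when the three subsets have a common point. -/
structure JoinData (X I : Type*) where
  dom : I → Set X
  rel : I → I → Prop
  rel_refl : ∀ i, rel i i
  rel_symm : ∀ i j, rel i j → rel j i
  rel_trans : ∀ i j k, rel i j → rel j k → (dom i ∩ dom j ∩ dom k).Nonempty → rel i k

namespace JoinData

variable {X I : Type*} (D : JoinData X I)

/-- The gluing relation on the disjoint union of the domains: two points are identified when they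
agree in `X` and their indices are related. -/
def setoid : Setoid (Σ i, D.dom i) where
  r a b := (a.2 : X) = b.2 ∧ D.rel a.1 b.1
  iseqv :=
    { refl := fun a ↦ ⟨rfl, D.rel_refl a.1⟩
      symm := fun h ↦ ⟨h.1.symm, D.rel_symm _ _ h.2⟩
      trans := by
        rintro ⟨i, x⟩ ⟨j, y⟩ ⟨k, z⟩ ⟨hxy : (x : X) = y, hij⟩ ⟨hyz : (y : X) = z, hjk⟩
        have hx : (x : X) ∈ D.dom i ∩ D.dom j ∩ D.dom k :=
          ⟨⟨x.2, hxy ▸ y.2⟩, hxy.trans hyz ▸ z.2⟩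
        exact ⟨hxy.trans hyz, D.rel_trans i j k hij hjk ⟨x, hx⟩⟩ }

/-- The join: the quotient of the disjoint union of the domains by the gluing relation. -/
def Join : Type _ := Quotient D.setoid

/-- The inclusion of the `i`-th domain into the join; its range is the `i`-th sheet. -/
def ι (i : I) (x : D.dom i) : D.Join := Quotient.mk D.setoid ⟨i, x⟩

/-- The projection of the join to the base `X`, the map `φ` of the theorem. -/
def proj : D.Join → X := Quotient.lift (fun a ↦ (a.2 : X)) fun _ _ h ↦ h.1

variable {D} {i j : I}

theorem ι_eq_ι_iff {x : D.dom i} {y : D.dom j} :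
    D.ι i x = D.ι j y ↔ (x : X) = y ∧ D.rel i j :=
  Quotient.eq

theorem exists_ι_eq (p : D.Join) : ∃ i x, D.ι i x = p := by
  obtain ⟨⟨i, x⟩, rfl⟩ := Quotient.exists_rep p
  exact ⟨i, x, rfl⟩

theorem ι_injective (i : I) : Injective (D.ι i) :=
  fun _ _ h ↦ Subtype.ext (ι_eq_ι_iff.1 h).1

theorem iUnion_range_ι (D : JoinData X I) : ⋃ i, range (D.ι i) = univ := by
  simpa only [iUnion_eq_univ_iff, mem_range] using exists_ι_eq

theorem range_ι_inter_range_ι_nonempty_iff :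
    (range (D.ι i) ∩ range (D.ι j)).Nonempty ↔ D.rel i j ∧ (D.dom i ∩ D.dom j).Nonempty := by
  constructor
  · rintro ⟨_, ⟨x, rfl⟩, y, hyx⟩
    obtain ⟨hxy, hij⟩ := ι_eq_ι_iff.1 hyx.symm
    exact ⟨hij, x, x.2, hxy ▸ y.2⟩
  · rintro ⟨hij, x, hxi, hxj⟩
    exact ⟨D.ι i ⟨x, hxi⟩, mem_range_self _, ⟨x, hxj⟩,
      ι_eq_ι_iff.2 ⟨rfl, D.rel_symm i j hij⟩⟩

theorem disjoint_range_ι (hij : ¬D.rel i j) : Disjoint (range (D.ι i)) (range (D.ι j)) := by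
  rw [disjoint_iff_inter_eq_empty, ← not_nonempty_iff_eq_empty,
    range_ι_inter_range_ι_nonempty_iff]
  exact fun h ↦ hij h.1

theorem ι_preimage_ι_image (i j : I) (U : Set (D.dom i)) :
    D.ι j ⁻¹' (D.ι i '' U) = {y : D.dom j | D.rel i j ∧ (y : X) ∈ Subtype.val '' U} := by
  ext y
  simp only [mem_preimage, mem_image, mem_ofPred_eq, ι_eq_ι_iff]
  constructor
  · rintro ⟨x, hxU, hxy, hij⟩
    exact ⟨hij, x, hxU, hxy⟩
  · rintro ⟨hij, x, hxU, hxy⟩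
    exact ⟨x, hxU, hxy, hij⟩

section Topology

variable [TopologicalSpace X]

instance : TopologicalSpace D.Join := inferInstanceAs (TopologicalSpace (Quotient D.setoid))

theorem isOpen_iff {U : Set D.Join} : IsOpen U ↔ ∀ i, IsOpen (D.ι i ⁻¹' U) :=
  isOpen_coinduced.trans isOpen_sigma_iff

theorem continuous_ι (i : I) : Continuous (D.ι i) :=
  continuous_def.2 fun _ hU ↦ isOpen_iff.1 hU i

theorem isOpenEmbedding_ι (hi : IsOpen (D.dom i)) : IsOpenEmbedding (D.ι i) := by
  refine .of_continuous_injective_isOpenMap (continuous_ι i) (ι_injective i) fun U hU ↦ ?_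
  refine isOpen_iff.2 fun j ↦ ?_
  rw [ι_preimage_ι_image]
  exact isOpen_const.and ((hi.isOpenMap_subtype_val U hU).preimage continuous_subtype_val)

theorem isLocalHomeomorph_proj (hopen : ∀ i, IsOpen (D.dom i)) : IsLocalHomeomorph D.proj := by
  intro p
  obtain ⟨i, x, rfl⟩ := exists_ι_eq p
  have hval : IsLocalHomeomorph (D.proj ∘ D.ι i) :=
    (hopen i).isOpenEmbedding_subtypeVal.isLocalHomeomorph
  have hι : IsLocalHomeomorph (D.ι i) := (isOpenEmbedding_ι (hopen i)).isLocalHomeomorph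
  exact hval.isLocalHomeomorphOn.of_comp_right hι.isLocalHomeomorphOn _
    (mem_image_of_mem _ (mem_univ x))

theorem isSeparatedMap_proj (hopen : ∀ i, IsOpen (D.dom i)) : IsSeparatedMap D.proj := by
  intro p q hpq hne
  obtain ⟨i, x, rfl⟩ := exists_ι_eq p
  obtain ⟨j, y, rfl⟩ := exists_ι_eq q
  have hij : ¬D.rel i j := fun hij ↦ hne (ι_eq_ι_iff.2 ⟨hpq, hij⟩)
  exact ⟨range (D.ι i), range (D.ι j), (isOpenEmbedding_ι (hopen i)).isOpen_range,
    (isOpenEmbedding_ι (hopen j)).isOpen_range, mem_range_self x, mem_range_self y,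
    disjoint_range_ι hij⟩

end Topology

end JoinData

theorem join_existence_general.{u, v}
    (M : Type u) [TopologicalSpace M]
    (I : Type v) (Ω : I → Set M) (hΩ : ∀ i, IsOpen (Ω i))
    (r : I → I → Prop) (hrefl : ∀ i, r i i) (hsymm : ∀ i j, r i j → r j i)
    (h2 : ∀ i j, r i j → (Ω i ∩ Ω j).Nonempty)
    (h3 : ∀ i j k, r i j → r j k → (Ω i ∩ Ω j ∩ Ω k).Nonempty → r i k) :
    ∃ (N : Type (max u v)) (_ : TopologicalSpace N) (φ : N → M) (α : ∀ i, Ω i → N),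
      IsSeparatedMap φ ∧ IsLocalHomeomorph φ ∧ (∀ i, Continuous (α i)) ∧
      (⋃ i, Set.range (α i)) = Set.univ ∧
      (∀ i j, r i j ↔ (Set.range (α i) ∩ Set.range (α j)).Nonempty) ∧
      (∀ i (x : Ω i), φ (α i x) = (x : M)) := by
  let D : JoinData M I := ⟨Ω, r, hrefl, hsymm, h3⟩
  refine ⟨D.Join, inferInstance, D.proj, D.ι, JoinData.isSeparatedMap_proj hΩ,
    JoinData.isLocalHomeomorph_proj hΩ, JoinData.continuous_ι, D.iUnion_range_ι, fun i j ↦ ?_,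
    fun _ _ ↦ rfl⟩
  rw [JoinData.range_ι_inter_range_ι_nonempty_iff]
  exact (and_iff_left_of_imp (h2 i j)).symm

/-- Existence part of the join construction (Theorem 2.2.1), stated topologically. -/
theorem join_existence.{u, v}
    (M : Type u) [TopologicalSpace M] [T2Space M]
    (I : Type v) (Ω : I → Set M) (hΩ : ∀ i, IsOpen (Ω i))
    (r : I → I → Prop) (hrefl : ∀ i, r i i) (hsymm : ∀ i j, r i j → r j i)
    (h1 : ∀ i j, IsPreconnected (Ω i ∩ Ω j))
    (h2 : ∀ i j, r i j → (Ω i ∩ Ω j).Nonempty)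
    (h3 : ∀ i j k, r i j → r j k → (Ω i ∩ Ω j ∩ Ω k).Nonempty → r i k) :
    ∃ (N : Type (max u v)) (_ : TopologicalSpace N) (_ : T2Space N)
      (φ : N → M) (α : ∀ i, Ω i → N),
      IsLocalHomeomorph φ ∧ (∀ i, Continuous (α i)) ∧
      (⋃ i, Set.range (α i)) = Set.univ ∧
      (∀ i j, r i j ↔ (Set.range (α i) ∩ Set.range (α j)).Nonempty) ∧
      (∀ i (x : Ω i), φ (α i x) = (x : M)) := by
  obtain ⟨N, _, φ, α, hsep, hloc, hα⟩ := join_existence_general M I Ω hΩ r hrefl hsymm h2 h3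
  exact ⟨N, inferInstance, t2Space_of_isSeparatedMap hsep hloc.continuous, φ, α, hloc, hα⟩
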